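/- Let f: ℝ^d → ℝ have L₁-Lipschitz gradient. For fixed x ∈ ℝ^d, independent standard Gaussians u, u' in ℝ^d, and δ > 0, it holds that E[(f(x + δu) - f(x + δu'))² ‖u‖²] ≤ 4(d+4)²‖∇f(x)‖² δ² + 2 L₁² δ⁴ (d+6)³. -/

import Mathlib

open MeasureTheory ProbabilityTheory

noncomputable def stdGaussian (d : ℕ) : Measure (EuclideanSpace ℝ (Fin d)) :=
  (Measure.pi fun _ : Fin d => gaussianReal 0 1).map
    ⇑(EuclideanSpace.equiv (Fin d) ℝ).symm

/-!
Write `f (x + δu) - f (x + δv) = δ⟪∇f(x), u - v⟫ + R(δu) - R(δv)` with first-order Taylor remainders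
`|R(w)| ≤ L/2 ‖w‖²`. Squaring leaves Gaussian moments of two kinds, `E ‖u‖²ⁿ` and
`E ⟪h, u⟫² ‖u‖²ⁿ`. Both follow from Stein's identity `E ⟪h, u⟫ g(u) = E ∂ₕg(u)`, applied to
`g(u) = ⟪h, u⟫ ‖u‖²ⁿ` and summed over `h` in an orthonormal basis.
-/

open Module
open scoped NNReal RealInnerProductSpace

-- As opposed to the root `stdGaussian`, this is basis-free: it lives on any Euclidean space.
local notation "γ" => ProbabilityTheory.stdGaussian

theorem norm_taylor_remainder_le
    {E F : Type*} [NormedAddCommGroup E] [NormedSpace ℝ E] [NormedAddCommGroup F] [NormedSpace ℝ F]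
    {f : E → F} {f' : E → E →L[ℝ] F} {L : ℝ} {x : E} (hf : ∀ y, HasFDerivAt f (f' y) y)
    (hL : ∀ y, ‖f' y - f' x‖ ≤ L * ‖y - x‖) (v : E) :
    ‖f (x + v) - f x - f' x v‖ ≤ L / 2 * ‖v‖ ^ 2 := by
  have hderiv (t : ℝ) : HasDerivAt (fun t : ℝ => f (x + t • v) - f x - t • f' x v)
      ((f' (x + t • v) - f' x) v) t := by
    have hline : HasDerivAt (fun t : ℝ => x + t • v) v t := by
      simpa using ((hasDerivAt_id t).smul_const v).const_add x
    simpa using (((hf _).comp_hasDerivAt t hline).sub_const (f x)).fun_sub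
      ((hasDerivAt_id t).smul_const (f' x v))
  have hbound (t : ℝ) (ht : 0 ≤ t) :
      ‖(f' (x + t • v) - f' x) v‖ ≤ L * ‖v‖ ^ 2 * t := by
    calc ‖(f' (x + t • v) - f' x) v‖ ≤ L * ‖x + t • v - x‖ * ‖v‖ :=
          ContinuousLinearMap.le_of_opNorm_le _ (hL _) v
      _ = L * ‖v‖ ^ 2 * t := by
          rw [add_sub_cancel_left, norm_smul, Real.norm_of_nonneg ht]; ring
  have hprim (t : ℝ) : HasDerivAt (fun t : ℝ => L / 2 * ‖v‖ ^ 2 * t ^ 2) (L * ‖v‖ ^ 2 * t) t := by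
    convert! (hasDerivAt_pow 2 t).const_mul (L / 2 * ‖v‖ ^ 2) using 1
    push_cast; ring
  simpa using image_norm_le_of_norm_deriv_right_le_deriv_boundary (a := 0) (b := 1)
    (fun t _ => (hderiv t).continuousAt.continuousWithinAt)
    (fun t _ => (hderiv t).hasDerivWithinAt) (by simp) hprim
    (fun t ht => hbound t ht.1) (Set.right_mem_Icc.2 zero_le_one)

theorem integral_comp_of_measurePreserving {α β F : Type*} [MeasurableSpace α] [MeasurableSpace β]
    [NormedAddCommGroup F] [NormedSpace ℝ F] {μ : Measure α} {ν : Measure β} {φ : α → β}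
    (hφ : MeasurePreserving φ μ ν) {g : β → F} (hg : AEStronglyMeasurable g ν) :
    ∫ x, g (φ x) ∂μ = ∫ y, g y ∂ν := by
  rw [← hφ.map_eq] at hg ⊢
  exact (integral_map hφ.aemeasurable hg).symm

section Stein

variable {F : Type*} [NormedAddCommGroup F] [NormedSpace ℝ F]

theorem hasDerivAt_gaussianPDFReal (m : ℝ) (v : ℝ≥0) (x : ℝ) :
    HasDerivAt (gaussianPDFReal m v) (-((x - m) / v) * gaussianPDFReal m v x) x := by
  have hexponent : HasDerivAt (fun x : ℝ => -(x - m) ^ 2 / (2 * v)) (-((x - m) / v)) x := by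
    convert! ((((hasDerivAt_id x).sub_const m).pow 2).neg.div_const (2 * v : ℝ)) using 1
    simp only [id]
    ring
  rw [gaussianPDFReal_def]
  convert! (hexponent.exp.const_mul (√(2 * Real.pi * v))⁻¹) using 1
  ring

theorem integrable_gaussianReal_iff {m : ℝ} {v : ℝ≥0} (hv : v ≠ 0) {g : ℝ → F} :
    Integrable g (gaussianReal m v) ↔ Integrable (fun x => gaussianPDFReal m v x • g x) := by
  rw [gaussianReal_of_var_ne_zero m hv,
    integrable_withDensity_iff_integrable_smul' (measurable_gaussianPDF m v)
      (.of_forall fun _ => gaussianPDF_lt_top)]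
  simp only [toReal_gaussianPDF]

theorem integral_sub_smul_gaussianReal {m : ℝ} {v : ℝ≥0} {g g' : ℝ → F}
    (hg : ∀ x, HasDerivAt g (g' x) x) (hgi : Integrable g (gaussianReal m v))
    (hgi' : Integrable g' (gaussianReal m v))
    (hxg : Integrable (fun x => (x - m) • g x) (gaussianReal m v)) :
    ∫ x, (x - m) • g x ∂(gaussianReal m v) = (v : ℝ) • ∫ x, g' x ∂(gaussianReal m v) := by
  rcases eq_or_ne v 0 with rfl | hv
  · rw [gaussianReal_zero_var, NNReal.coe_zero, zero_smul]
    exact integral_eq_zero_of_ae (by simp [Filter.EventuallyEq, ae_dirac_eq])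
  have hpdf (x : ℝ) : (-((x - m) / v) * gaussianPDFReal m v x) • g x
      = -((v : ℝ)⁻¹ • gaussianPDFReal m v x • (x - m) • g x) := by
    rw [smul_smul, smul_smul, ← neg_smul]
    congr 1
    ring
  have hparts := integral_bilinear_hasDerivAt_right_eq_neg_left_of_integrable
    (L := ContinuousLinearMap.lsmul ℝ ℝ) (fun x _ => hasDerivAt_gaussianPDFReal m v x)
    (fun x _ => hg x) ((integrable_gaussianReal_iff hv).1 hgi')
    (by simpa only [ContinuousLinearMap.lsmul_apply, hpdf] using
      (((integrable_gaussianReal_iff hv).1 hxg).fun_smul (v : ℝ)⁻¹).fun_neg)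
    ((integrable_gaussianReal_iff hv).1 hgi)
  simp only [ContinuousLinearMap.lsmul_apply, hpdf, integral_neg, integral_smul,
    neg_neg] at hparts
  rw [integral_gaussianReal_eq_integral_smul hv, integral_gaussianReal_eq_integral_smul hv, hparts,
    smul_inv_smul₀ (by exact_mod_cast hv)]

variable {E : Type*} [NormedAddCommGroup E] [InnerProductSpace ℝ E]

/-- `replaceCoord e (u, x)` is the vector `u` with its coordinate along the unit vector `e` replaced
by `x`; it is used to condition a standard Gaussian vector on all its coordinates but one. -/
noncomputable def replaceCoord (e : E) (p : E × ℝ) : E :=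
  p.1 + (p.2 - ⟪e, p.1⟫) • e

theorem replaceCoord_add (e u : E) (x t : ℝ) :
    replaceCoord e (u, x + t) = replaceCoord e (u, x) + t • e := by
  simp only [replaceCoord]
  module

theorem inner_replaceCoord {e : E} (he : ‖e‖ = 1) (p : E × ℝ) : ⟪e, replaceCoord e p⟫ = p.2 := by
  simp [replaceCoord, inner_add_right, inner_smul_right, he]

variable [FiniteDimensional ℝ E] [MeasurableSpace E] [BorelSpace E]

theorem measurePreserving_replaceCoord {e : E} (he : ‖e‖ = 1) :
    MeasurePreserving (replaceCoord e) ((γ E).prod (gaussianReal 0 1)) (γ E) := by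
  have hmeas : Measurable (replaceCoord e) := by unfold replaceCoord; fun_prop
  refine ⟨hmeas, Measure.ext_of_charFun (funext fun t => ?_)⟩
  have hinner (p : E × ℝ) :
      ⟪replaceCoord e p, t⟫ = ⟪p.1, t - ⟪e, t⟫ • e⟫ + ⟪p.2, ⟪e, t⟫⟫ := by
    simp only [replaceCoord, inner_add_left, inner_sub_right, inner_smul_left, inner_smul_right,
      real_inner_comm e p.1, RCLike.inner_apply, conj_trivial]
    ring
  have hnorm : ‖t - ⟪e, t⟫ • e‖ ^ 2 = ‖t‖ ^ 2 - ⟪e, t⟫ ^ 2 := by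
    rw [norm_sub_sq_real, inner_smul_right, real_inner_comm, norm_smul, he, mul_one,
      Real.norm_eq_abs, sq_abs]
    ring
  calc charFun (((γ E).prod (gaussianReal 0 1)).map _) t
      = charFun (γ E) (t - ⟪e, t⟫ • e) * charFun (gaussianReal 0 1) ⟪e, t⟫ := by
        rw [charFun_apply, integral_map hmeas.aemeasurable (by fun_prop), charFun_apply,
          charFun_apply, ← integral_prod_mul]
        simp only [hinner, Complex.ofReal_add, add_mul, Complex.exp_add]
    _ = charFun (γ E) t := by
        rw [charFun_stdGaussian, charFun_stdGaussian, charFun_gaussianReal, ← Complex.exp_add]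
        congr 1
        norm_cast
        rw [hnorm]
        push_cast
        ring

theorem integral_inner_smul_stdGaussian_of_norm_eq_one {e : E} (he : ‖e‖ = 1) {g g' : E → F}
    (hg : ∀ u, HasLineDerivAt ℝ g (g' u) u e)
    (hgi : Integrable g (γ E)) (hgi' : Integrable g' (γ E))
    (heg : Integrable (fun u => ⟪e, u⟫ • g u) (γ E)) :
    ∫ u, ⟪e, u⟫ • g u ∂γ E = ∫ u, g' u ∂γ E := by
  have hT := measurePreserving_replaceCoord he
  have hderiv (u : E) (x : ℝ) :
      HasDerivAt (fun x => g (replaceCoord e (u, x))) (g' (replaceCoord e (u, x))) x := by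
    have hline : HasDerivAt (fun t => g (replaceCoord e (u, x) + t • e))
        (g' (replaceCoord e (u, x))) (x - x) := by simpa using! hg (replaceCoord e (u, x))
    simpa [← replaceCoord_add] using hline.comp_sub_const x x
  have hgT := hT.integrable_comp_of_integrable hgi
  have hgT' := hT.integrable_comp_of_integrable hgi'
  have hegT := hT.integrable_comp_of_integrable heg
  have hslice : ∀ᵐ u ∂γ E,
      ∫ x, ⟪e, replaceCoord e (u, x)⟫ • g (replaceCoord e (u, x)) ∂(gaussianReal 0 1)
        = ∫ x, g' (replaceCoord e (u, x)) ∂(gaussianReal 0 1) := by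
    filter_upwards [hgT.prod_right_ae, hgT'.prod_right_ae, hegT.prod_right_ae] with u h h' hx
    simpa [inner_replaceCoord he] using
      integral_sub_smul_gaussianReal (hderiv u) h h' (by simpa [inner_replaceCoord he] using hx)
  calc ∫ u, ⟪e, u⟫ • g u ∂γ E
      = ∫ u, ∫ x, ⟪e, replaceCoord e (u, x)⟫ • g (replaceCoord e (u, x)) ∂(gaussianReal 0 1)
          ∂γ E := by
        rw [← integral_comp_of_measurePreserving hT heg.aestronglyMeasurable]
        exact integral_prod _ hegT
    _ = ∫ u, ∫ x, g' (replaceCoord e (u, x)) ∂(gaussianReal 0 1) ∂γ E := integral_congr_ae hslice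
    _ = ∫ u, g' u ∂γ E := by
        rw [← integral_comp_of_measurePreserving hT hgi'.aestronglyMeasurable]
        exact (integral_prod _ hgT').symm

theorem integral_inner_smul_stdGaussian {h : E} {g g' : E → F}
    (hg : ∀ u, HasLineDerivAt ℝ g (g' u) u h)
    (hgi : Integrable g (γ E)) (hgi' : Integrable g' (γ E))
    (hhg : Integrable (fun u => ⟪h, u⟫ • g u) (γ E)) :
    ∫ u, ⟪h, u⟫ • g u ∂γ E = ∫ u, g' u ∂γ E := by
  rcases eq_or_ne h 0 with rfl | hh
  · simp [fun u => (hg u).unique hasLineDerivAt_zero]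
  have hunit := integral_inner_smul_stdGaussian_of_norm_eq_one (norm_smul_inv_norm (𝕜 := ℝ) hh)
    (fun u => (hg u).smul (‖h‖⁻¹ : ℝ)) hgi (hgi'.fun_smul _)
    (by simpa [inner_smul_left, mul_smul] using hhg.fun_smul (‖h‖⁻¹ : ℝ))
  simp only [inner_smul_left, mul_smul, integral_smul, RCLike.ofReal_real_eq_id,
    id, conj_trivial] at hunit
  exact smul_right_injective F (inv_ne_zero (norm_ne_zero_iff.2 hh)) hunit

end Stein

section Moments

theorem integrable_norm_pow_of_isGaussian {B : Type*} [NormedAddCommGroup B] [NormedSpace ℝ B]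
    [CompleteSpace B] [SecondCountableTopology B] [MeasurableSpace B] [BorelSpace B]
    (μ : Measure B) [IsGaussian μ] (n : ℕ) : Integrable (fun u => ‖u‖ ^ n) μ :=
  (IsGaussian.memLp_id μ n (by simp)).integrable_norm_pow'

variable {E : Type*} [NormedAddCommGroup E] [InnerProductSpace ℝ E]

-- At `n = 0` the truncated `n - 1` is harmless, since its term has the factor `n`.
theorem hasLineDerivAt_inner_mul_norm_pow (n : ℕ) (h u : E) :
    HasLineDerivAt ℝ (fun u => ⟪h, u⟫ * ‖u‖ ^ (2 * n))
      (‖h‖ ^ 2 * ‖u‖ ^ (2 * n) + 2 * n * (⟪h, u⟫ ^ 2 * ‖u‖ ^ (2 * (n - 1)))) u h := by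
  have hinner : HasFDerivAt (fun u => ⟪h, u⟫) (innerSL ℝ h) u := (innerSL ℝ h).hasFDerivAt
  have hnorm : HasFDerivAt (fun u : E => (‖u‖ ^ 2) ^ n) _ u :=
    (hasStrictFDerivAt_norm_sq u).hasFDerivAt.pow n
  simp only [pow_mul]
  convert! (hinner.mul hnorm).hasLineDerivAt h using 1
  simp only [add_apply, smul_apply, coe_innerSL_apply, real_inner_comm h u, nsmul_eq_mul,
    smul_eq_mul, inner_self_eq_norm_sq_to_K, Real.ringHom_apply, Nat.cast_ofNat]
  ring

variable [MeasurableSpace E] [BorelSpace E]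

theorem integrable_inner_pow_mul_norm_pow_of_isGaussian [CompleteSpace E]
    [SecondCountableTopology E] (μ : Measure E) [IsGaussian μ] (h : E) (k m : ℕ) :
    Integrable (fun u => ⟪h, u⟫ ^ k * ‖u‖ ^ m) μ := by
  refine ((integrable_norm_pow_of_isGaussian μ (k + m)).const_mul (‖h‖ ^ k)).mono' (by fun_prop)
    (.of_forall fun u => ?_)
  calc ‖⟪h, u⟫ ^ k * ‖u‖ ^ m‖ = |⟪h, u⟫| ^ k * ‖u‖ ^ m := by simp
    _ ≤ (‖h‖ * ‖u‖) ^ k * ‖u‖ ^ m := by gcongr; exact abs_real_inner_le_norm h u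
    _ = ‖h‖ ^ k * ‖u‖ ^ (k + m) := by ring

variable [FiniteDimensional ℝ E]

theorem integral_inner_sq_mul_norm_pow_stdGaussian_eq_add (h : E) (n : ℕ) :
    ∫ u, ⟪h, u⟫ ^ 2 * ‖u‖ ^ (2 * n) ∂γ E
      = ‖h‖ ^ 2 * ∫ u, ‖u‖ ^ (2 * n) ∂γ E
        + 2 * n * ∫ u, ⟪h, u⟫ ^ 2 * ‖u‖ ^ (2 * (n - 1)) ∂γ E := by
  have hnorm := (integrable_norm_pow_of_isGaussian (γ E) (2 * n)).const_mul (‖h‖ ^ 2)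
  have hinner := integrable_inner_pow_mul_norm_pow_of_isGaussian (γ E) h
  have hrest := (hinner 2 (2 * (n - 1))).const_mul (2 * n : ℝ)
  have hstein := integral_inner_smul_stdGaussian (hasLineDerivAt_inner_mul_norm_pow n h)
    (by simpa using hinner 1 (2 * n)) (hnorm.add hrest)
    (by simpa [← mul_assoc, ← sq] using hinner 2 (2 * n))
  rw [integral_add hnorm hrest, integral_const_mul, integral_const_mul] at hstein
  simpa [← mul_assoc, ← sq] using hstein

theorem integral_norm_pow_add_two_stdGaussian_eq_sum {ι : Type*} [Fintype ι]
    (b : OrthonormalBasis ι ℝ E) (n : ℕ) :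
    ∫ u, ‖u‖ ^ (2 * (n + 1)) ∂γ E
      = ∑ i, ∫ u, ⟪b i, u⟫ ^ 2 * ‖u‖ ^ (2 * n) ∂γ E := by
  rw [← integral_finsetSum _ fun i _ => integrable_inner_pow_mul_norm_pow_of_isGaussian _ _ _ _]
  simp only [← Finset.sum_mul, b.sum_sq_inner_right, ← pow_add, mul_add_one, add_comm]

theorem integral_norm_pow_two_mul_stdGaussian (n : ℕ) :
    ∫ u, ‖u‖ ^ (2 * n) ∂γ E = ∏ i ∈ Finset.range n, ((finrank ℝ E : ℝ) + 2 * i) := by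
  induction n with
  | zero => simp
  | succ n ih =>
    have hbasis := integral_norm_pow_add_two_stdGaussian_eq_sum (stdOrthonormalBasis ℝ E)
    rw [hbasis, Finset.prod_range_succ, ← ih]
    simp only [integral_inner_sq_mul_norm_pow_stdGaussian_eq_add _ n, Finset.sum_add_distrib,
      ← Finset.mul_sum, OrthonormalBasis.norm_eq_one, ← hbasis]
    cases n with
    | zero => simp
    | succ n =>
      simp only [one_pow, one_mul, Finset.sum_const, Finset.card_univ, Fintype.card_fin,
        nsmul_eq_mul, Nat.cast_add, Nat.cast_one, add_tsub_cancel_right]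
      ring

theorem integral_inner_sq_stdGaussian (h : E) : ∫ u, ⟪h, u⟫ ^ 2 ∂γ E = ‖h‖ ^ 2 := by
  simpa using integral_inner_sq_mul_norm_pow_stdGaussian_eq_add h 0

theorem integral_norm_sq_stdGaussian : ∫ u, ‖u‖ ^ 2 ∂γ E = finrank ℝ E := by
  simpa using integral_norm_pow_two_mul_stdGaussian (E := E) 1

theorem integral_inner_sq_mul_norm_sq_stdGaussian (h : E) :
    ∫ u, ⟪h, u⟫ ^ 2 * ‖u‖ ^ 2 ∂γ E = (finrank ℝ E + 2) * ‖h‖ ^ 2 := by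
  have hrec := integral_inner_sq_mul_norm_pow_stdGaussian_eq_add h 1
  simp only [mul_one, tsub_self, mul_zero, pow_zero, Nat.cast_one, integral_norm_sq_stdGaussian,
    integral_inner_sq_stdGaussian] at hrec
  rw [hrec]
  ring

theorem integral_inner_stdGaussian (h : E) : ∫ u, ⟪h, u⟫ ∂γ E = 0 := by
  simpa using integral_strongDual_stdGaussian (innerSL ℝ h)

theorem integral_inner_sub_sq_stdGaussian (h u : E) :
    ∫ v, ⟪h, u - v⟫ ^ 2 ∂γ E = ⟪h, u⟫ ^ 2 + ‖h‖ ^ 2 := by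
  have hlin : Integrable (fun v => 2 * ⟪h, u⟫ * ⟪h, v⟫) (γ E) := by
    simpa using (integrable_inner_pow_mul_norm_pow_of_isGaussian (γ E) h 1 0).const_mul
      (2 * ⟪h, u⟫)
  have hsq : Integrable (fun v => ⟪h, v⟫ ^ 2) (γ E) := by
    simpa using integrable_inner_pow_mul_norm_pow_of_isGaussian (γ E) h 2 0
  have hdiff : Integrable (fun v => ⟪h, u⟫ ^ 2 - 2 * ⟪h, u⟫ * ⟪h, v⟫) (γ E) :=
    (integrable_const _).sub hlin
  simp only [inner_sub_right, sub_sq]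
  rw [integral_add hdiff hsq, integral_sub (integrable_const _) hlin, integral_const_mul,
    integral_inner_stdGaussian, integral_inner_sq_stdGaussian, integral_const, probReal_univ]
  simp

theorem integrable_inner_sub_sq_mul_norm_sq_stdGaussian_prod (h : E) :
    Integrable (fun p : E × E => ⟪h, p.1 - p.2⟫ ^ 2 * ‖p.1‖ ^ 2) ((γ E).prod (γ E)) := by
  refine ((integrable_norm_pow_of_isGaussian ((γ E).prod (γ E)) 4).const_mul (4 * ‖h‖ ^ 2)).mono'
    (by fun_prop) (.of_forall fun p => ?_)
  calc ‖⟪h, p.1 - p.2⟫ ^ 2 * ‖p.1‖ ^ 2‖ = |⟪h, p.1 - p.2⟫| ^ 2 * ‖p.1‖ ^ 2 := by simp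
    _ ≤ (‖h‖ * (‖p‖ + ‖p‖)) ^ 2 * ‖p‖ ^ 2 := by
        gcongr
        · exact (abs_real_inner_le_norm _ _).trans (by
            gcongr
            exact (norm_sub_le _ _).trans (add_le_add (norm_fst_le p) (norm_snd_le p)))
        · exact norm_fst_le p
    _ = 4 * ‖h‖ ^ 2 * ‖p‖ ^ 4 := by ring

theorem integral_inner_sub_sq_mul_norm_sq_stdGaussian_prod (h : E) :
    ∫ p : E × E, ⟪h, p.1 - p.2⟫ ^ 2 * ‖p.1‖ ^ 2 ∂((γ E).prod (γ E))
      = 2 * (finrank ℝ E + 1) * ‖h‖ ^ 2 := by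
  rw [integral_prod _ (integrable_inner_sub_sq_mul_norm_sq_stdGaussian_prod h)]
  simp only [integral_mul_const, integral_inner_sub_sq_stdGaussian, add_mul]
  rw [integral_add (integrable_inner_pow_mul_norm_pow_of_isGaussian _ h 2 2)
    ((integrable_norm_pow_of_isGaussian _ 2).const_mul _), integral_const_mul,
    integral_inner_sq_mul_norm_sq_stdGaussian, integral_norm_sq_stdGaussian]
  ring

theorem integrable_norm_sq_mul_norm_pow_four_add_stdGaussian_prod :
    Integrable (fun p : E × E => ‖p.1‖ ^ 2 * (‖p.1‖ ^ 4 + ‖p.2‖ ^ 4)) ((γ E).prod (γ E)) := by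
  have hpow := integrable_norm_pow_of_isGaussian (γ E)
  exact (((hpow 6).comp_fst (γ E)).fun_add ((hpow 2).mul_prod (hpow 4))).congr
    (.of_forall fun p => by ring)

theorem integral_norm_sq_mul_norm_pow_four_add_stdGaussian_prod :
    ∫ p : E × E, ‖p.1‖ ^ 2 * (‖p.1‖ ^ 4 + ‖p.2‖ ^ 4) ∂((γ E).prod (γ E))
      = 2 * finrank ℝ E * (finrank ℝ E + 2) ^ 2 := by
  have hpow := integrable_norm_pow_of_isGaussian (γ E)
  have hmoment (n : ℕ) := integral_norm_pow_two_mul_stdGaussian (E := E) n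
  have hinner (u : E) : ∫ v, ‖u‖ ^ 2 * (‖u‖ ^ 4 + ‖v‖ ^ 4) ∂γ E
      = ‖u‖ ^ 6 + (∫ v, ‖v‖ ^ 4 ∂γ E) * ‖u‖ ^ 2 := by
    rw [integral_const_mul, integral_add (integrable_const _) (hpow 4), integral_const,
      probReal_univ, one_smul]
    ring
  rw [integral_prod _ integrable_norm_sq_mul_norm_pow_four_add_stdGaussian_prod]
  simp only [hinner]
  rw [integral_add (hpow 6) ((hpow 2).const_mul _), integral_const_mul, hmoment 1, hmoment 2,
    hmoment 3]
  simp only [Finset.prod_range_succ, Finset.prod_range_zero]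
  push_cast
  ring

end Moments

theorem sq_sub_mul_norm_sq_le {E : Type*} [NormedAddCommGroup E] [InnerProductSpace ℝ E]
    [CompleteSpace E] {f : E → ℝ} {L : ℝ} {x : E} (hf : Differentiable ℝ f)
    (hL : ∀ y, ‖gradient f y - gradient f x‖ ≤ L * ‖y - x‖) (δ : ℝ) (u v : E) :
    (f (x + δ • u) - f (x + δ • v)) ^ 2 * ‖u‖ ^ 2
      ≤ 2 * δ ^ 2 * (⟪gradient f x, u - v⟫ ^ 2 * ‖u‖ ^ 2)
        + L ^ 2 * δ ^ 4 * (‖u‖ ^ 2 * (‖u‖ ^ 4 + ‖v‖ ^ 4)) := by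
  set R : E → ℝ := fun w => f (x + w) - f x - ⟪gradient f x, w⟫ with hR
  have hremainder (w : E) : R (δ • w) ^ 2 ≤ (L / 2 * δ ^ 2 * ‖w‖ ^ 2) ^ 2 := by
    have htaylor : ‖R (δ • w)‖ ≤ L / 2 * ‖δ • w‖ ^ 2 :=
      norm_taylor_remainder_le (fun y => (hf y).hasGradientAt.hasFDerivAt)
        (fun y => by simpa only [← map_sub, LinearIsometryEquiv.norm_map] using hL y) (δ • w)
    rw [norm_smul, mul_pow, Real.norm_eq_abs δ, sq_abs, ← mul_assoc] at htaylor
    exact sq_le_sq' (neg_le_of_abs_le htaylor) (le_of_abs_le htaylor)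
  have hdecomp : f (x + δ • u) - f (x + δ • v)
      = δ * ⟪gradient f x, u - v⟫ + R (δ • u) - R (δ • v) := by
    simp only [hR, inner_smul_right, inner_sub_right]
    ring
  calc (f (x + δ • u) - f (x + δ • v)) ^ 2 * ‖u‖ ^ 2
      ≤ (2 * (δ * ⟪gradient f x, u - v⟫) ^ 2 + 4 * R (δ • u) ^ 2 + 4 * R (δ • v) ^ 2)
          * ‖u‖ ^ 2 := by
        rw [hdecomp]
        gcongr
        linarith [add_sq_le (a := δ * ⟪gradient f x, u - v⟫) (b := R (δ • u) - R (δ • v)),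
          add_sq_le (a := R (δ • u)) (b := -R (δ • v))]
    _ ≤ (2 * (δ * ⟪gradient f x, u - v⟫) ^ 2 + 4 * (L / 2 * δ ^ 2 * ‖u‖ ^ 2) ^ 2
          + 4 * (L / 2 * δ ^ 2 * ‖v‖ ^ 2) ^ 2) * ‖u‖ ^ 2 := by
        gcongr ?_ * _
        linarith [hremainder u, hremainder v]
    _ = 2 * δ ^ 2 * (⟪gradient f x, u - v⟫ ^ 2 * ‖u‖ ^ 2)
        + L ^ 2 * δ ^ 4 * (‖u‖ ^ 2 * (‖u‖ ^ 4 + ‖v‖ ^ 4)) := by ring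

theorem smooth_perturbation_second_moment_general {E : Type*} [NormedAddCommGroup E]
    [InnerProductSpace ℝ E] [FiniteDimensional ℝ E] [MeasurableSpace E] [BorelSpace E]
    {f : E → ℝ} {L : ℝ} {x : E} (hf : Differentiable ℝ f)
    (hL : ∀ y, ‖gradient f y - gradient f x‖ ≤ L * ‖y - x‖) (δ : ℝ) :
    ∫ p : E × E, (f (x + δ • p.1) - f (x + δ • p.2)) ^ 2 * ‖p.1‖ ^ 2 ∂((γ E).prod (γ E))
      ≤ 4 * (finrank ℝ E + 1) * ‖gradient f x‖ ^ 2 * δ ^ 2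
        + 2 * L ^ 2 * δ ^ 4 * (finrank ℝ E * (finrank ℝ E + 2) ^ 2) := by
  have hlinear := (integrable_inner_sub_sq_mul_norm_sq_stdGaussian_prod (gradient f x)).const_mul
    (2 * δ ^ 2)
  have hremainder := (integrable_norm_sq_mul_norm_pow_four_add_stdGaussian_prod (E := E)).const_mul
    (L ^ 2 * δ ^ 4)
  refine (integral_mono_of_nonneg (.of_forall fun _ => by positivity) (hlinear.add hremainder)
    (.of_forall fun p => sq_sub_mul_norm_sq_le hf hL δ p.1 p.2)).trans_eq ?_
  rw [integral_add' hlinear hremainder, integral_const_mul, integral_const_mul,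
    integral_inner_sub_sq_mul_norm_sq_stdGaussian_prod,
    integral_norm_sq_mul_norm_pow_four_add_stdGaussian_prod]
  ring

theorem stdGaussian_eq_stdGaussian_euclideanSpace (d : ℕ) :
    stdGaussian d = γ (EuclideanSpace ℝ (Fin d)) :=
  map_pi_eq_stdGaussian

theorem smooth_perturbation_second_moment
    (d : ℕ) (f : EuclideanSpace ℝ (Fin d) → ℝ) (L₁ δ : ℝ) (hδ : 0 < δ)
    (hdiff : Differentiable ℝ f)
    (hL : ∀ x y, ‖gradient f x - gradient f y‖ ≤ L₁ * ‖x - y‖)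
    (x : EuclideanSpace ℝ (Fin d)) :
    ∫ p : EuclideanSpace ℝ (Fin d) × EuclideanSpace ℝ (Fin d),
        (f (x + δ • p.1) - f (x + δ • p.2)) ^ 2 * ‖p.1‖ ^ 2
        ∂((stdGaussian d).prod (stdGaussian d)) ≤
      4 * ((d : ℝ) + 4) ^ 2 * ‖gradient f x‖ ^ 2 * δ ^ 2
        + 2 * L₁ ^ 2 * δ ^ 4 * ((d : ℝ) + 6) ^ 3 := by
  have hsharp := smooth_perturbation_second_moment_general hdiff (fun y => hL y x) δ
  rw [finrank_euclideanSpace_fin, ← stdGaussian_eq_stdGaussian_euclideanSpace] at hsharp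
  refine hsharp.trans ?_
  gcongr <;> nlinarith [(Nat.cast_nonneg d : (0 : ℝ) ≤ d)]
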